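/- Fix p ∈ [1,∞], D, E ∈ ℕ₊ and S, I > 0. For every continuous map g : B̄_S × B̄_I → B̄_S and every ε > 0, there exists a continuous map g′ : B̄_S × B̄_I → B̄_S with sup_{(x,v)∈B̄_S×B̄_I} ‖g(x,v) − g′(x,v)‖_p ≤ ε such that g′ does not have the echo state property; indeed, g′ can be chosen so that for some v₀ ∈ B̄_I the map x ↦ g′(x, v₀) has at least two distinct fixed points in B̄_S, whence the constant input sequence (…, v₀, v₀) admits at least two distinct state sequences of g′. Consequently, the set of continuous state maps without the echo state property is dense in the space of continuous maps B̄_S × B̄_I → ℝ^D equipped with the supremum p-norm. -/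

import Mathlib

/-!
The input `0` gives a continuous self-map `g (·, 0)` of the `p`-ball, which has a fixed point `x₁`
by Brouwer's theorem (`brouwer_closedBall`). Put `g' = g + c • (x - g)`, where the weight
`c ∈ [0, 1]` depends only on `‖g (x, v) - x‖`, equals `1` when this is at most `ε / 2` and vanishes
when it is at least `ε`. The ball is convex, so `g'` preserves it; `‖g - g'‖ = c ‖g - x‖ ≤ ε`; and
every point of the ball that `g (·, 0)` moves by at most `ε / 2`, in particular every point of the
ball close enough to `x₁`, is a fixed point of `g' (·, 0)`.

Brouwer's theorem is obtained from the volume argument of Milnor and Rogers (`no_retraction`).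
Suppose `f` is `C¹` with values in the sphere of radius `R` and is the identity on that sphere, and
let `h = f - id`. For small `t ≥ 0` the map `id + t h` is a bijection of the closed ball `B`
(`image_closedBall_of_small`) with positive Jacobian determinant, so the integral over `B` of
`det (id + t Dh)` is the volume of `B`. This integral is polynomial in `t`, so it also equals the
volume at `t = 1`, where the integrand `det Df` is zero because `f` takes values in a sphere.
Consequently a `C¹` map that is the identity on a sphere has a zero
(`exists_zero_of_eq_id_outside`). Applied to `x - k x`, with `k` a smooth approximation of a
cutoff of a bounded continuous map `G`, this gives approximate fixed points of `G`, and compactness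
gives a fixed point (`exists_fixedPoint_of_bounded`). For a general norm, compose the self-map of
the ball with the radial projection and transport it to Euclidean space.
-/

open MeasureTheory
open scoped ENNReal

/-- The `p`-norm on `ℝ^D`, for `p ∈ [1,∞]` (sup-norm when `p = ∞`). -/
noncomputable def pnorm (p : ℝ≥0∞) {D : ℕ} (x : Fin D → ℝ) : ℝ :=
  if p = ⊤ then ⨆ i, |x i| else (∑ i, |x i| ^ p.toReal) ^ (1 / p.toReal)

/-- `D^{1/p}`, with the convention `D^{1/∞} = 1`. -/
noncomputable def dpow (p : ℝ≥0∞) (D : ℕ) : ℝ :=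
  if p = ⊤ then 1 else (D : ℝ) ^ (1 / p.toReal)

/-- Dot product on `ℝ^Q`. -/
noncomputable def dotp {Q : ℕ} (ω x : Fin Q → ℝ) : ℝ := ∑ i, ω i * x i

/-- The seminorm `‖ω‖_B = sup_{x ∈ B} |ω·x|`. -/
noncomputable def normOn {Q : ℕ} (B : Set (Fin Q → ℝ)) (ω : Fin Q → ℝ) : ℝ :=
  ⨆ x ∈ B, |dotp ω x|

/-- Membership in the family `F¹_{N,M}` of real-valued bounded-parameter ReLU FNNs. -/
def memF1 (p : ℝ≥0∞) (D E N : ℕ) (M S I : ℝ)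
    (f : (Fin D → ℝ) → (Fin E → ℝ) → ℝ) : Prop :=
  ∃ (a : Fin (4 * N) → ℝ) (b : Fin (4 * N) → Fin D → ℝ)
    (c : Fin (4 * N) → Fin E → ℝ) (d : Fin (4 * N) → ℝ) (e : ℝ),
    (∀ n, |a n| ≤ 2 * Real.sqrt M) ∧
    (∀ n, normOn {x : Fin D → ℝ | pnorm p x ≤ S} (b n) ≤ Real.sqrt M) ∧
    (∀ n, normOn {u : Fin E → ℝ | pnorm p u ≤ I} (c n) ≤ Real.sqrt M) ∧
    (∀ n, |d n| ≤ 2 * Real.sqrt M) ∧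
    |e| ≤ M ∧
    ∀ s u, f s u = (∑ n, a n * max 0 (dotp (b n) s + dotp (c n) u + d n)) + e

open Metric Set Filter Topology Polynomial

/-! ### Brouwer's fixed point theorem -/

/-- `t ↦ det (id + t A)` is a polynomial of degree at most the dimension. -/
lemma exists_poly_det {V : Type*} [NormedAddCommGroup V] [NormedSpace ℝ V]
    [FiniteDimensional ℝ V] (A : V →L[ℝ] V) :
    ∃ q : ℝ[X], q.natDegree ≤ Module.finrank ℝ V ∧
      ∀ t : ℝ, q.eval t = (ContinuousLinearMap.id ℝ V + t • A).det := by
  classical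
  let b := Module.finBasis ℝ V
  let M := LinearMap.toMatrix b b (A : V →ₗ[ℝ] V)
  refine ⟨Matrix.det ((X : ℝ[X]) • M.map C + (1 : Matrix _ _ ℝ).map C), ?_, fun t => ?_⟩
  · simpa using natDegree_det_X_add_C_le M 1
  · have h1 := mul_comm t
    rw [ContinuousLinearMap.det, ← LinearMap.det_toMatrix b, ← coe_evalRingHom,
      RingHom.map_det]
    congr 1
    ext i j
    by_cases h : i = j <;>
      simp [M, LinearMap.toMatrix_apply, h, add_comm, h1]

/-- Extension by zero outside a ball preserves the Lipschitz constant when the map vanishes on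
the sphere: a segment leaving the ball crosses the sphere. -/
lemma lipschitz_indicator_closedBall {V : Type*} [NormedAddCommGroup V] [NormedSpace ℝ V]
    {h : V → V} {R : ℝ} {K : NNReal} (hK : LipschitzOnWith K h (closedBall 0 R))
    (h0 : ∀ x, ‖x‖ = R → h x = 0) : LipschitzWith K ((closedBall 0 R).indicator h) := by
  have key : ∀ x y : V, ‖x‖ ≤ R → R < ‖y‖ → dist (h x) 0 ≤ K * dist x y := by
    intro x y hx hy
    have hc : ContinuousOn (fun s : ℝ => ‖AffineMap.lineMap x y s‖) (Icc 0 1) := by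
      refine Continuous.continuousOn ?_
      exact (AffineMap.lineMap_continuous (R := ℝ)).norm
    obtain ⟨s, hs, hsR⟩ := intermediate_value_Icc (zero_le_one' ℝ) hc
      (show R ∈ Icc _ _ by simpa using ⟨hx, hy.le⟩)
    have hsR : ‖AffineMap.lineMap x y s‖ = R := hsR
    have h1 := hK.dist_le_mul x (by simpa using hx) (AffineMap.lineMap x y s)
      (by simpa using hsR.le)
    rw [h0 _ hsR, dist_left_lineMap, Real.norm_of_nonneg hs.1] at h1
    refine h1.trans ?_
    gcongr
    exact mul_le_of_le_one_left dist_nonneg hs.2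
  refine LipschitzWith.of_dist_le_mul fun x y => ?_
  by_cases hx : x ∈ closedBall (0 : V) R <;> by_cases hy : y ∈ closedBall (0 : V) R
  · simpa [hx, hy] using hK.dist_le_mul x hx y hy
  · rw [indicator_of_mem hx, indicator_of_notMem hy]
    exact key x y (by simpa using hx) (by simpa using hy)
  · rw [indicator_of_mem hy, indicator_of_notMem hx, dist_comm, dist_comm x]
    exact key y x (by simpa using hy) (by simpa using hx)
  · rw [indicator_of_notMem hy, indicator_of_notMem hx, dist_self]
    positivity

/-- For small `t`, the map `id + t h`, with `h` Lipschitz and zero on the sphere, permutes the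
closed ball. With `h` extended by zero it is a bijection of the whole space, as a Lipschitz
perturbation of the identity, and it fixes every point outside the ball. -/
lemma image_closedBall_of_small {V : Type*} [NormedAddCommGroup V] [NormedSpace ℝ V]
    [FiniteDimensional ℝ V]
    {h : V → V} {R : ℝ} {K : NNReal} (hK : LipschitzOnWith K h (closedBall 0 R))
    (h0 : ∀ x, ‖x‖ = R → h x = 0) {t : ℝ} (ht0 : 0 ≤ t) (ht : t * K < 1) :
    InjOn (fun x => x + t • h x) (closedBall 0 R) ∧
      (fun x => x + t • h x) '' closedBall 0 R = closedBall 0 R := by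
  lift t to NNReal using ht0
  set ψ : V → V := fun x => x + (t : ℝ) • (closedBall 0 R).indicator h x with hψ
  have hL := lipschitz_indicator_closedBall hK h0
  have happ : ApproximatesLinearOn ψ ((ContinuousLinearEquiv.refl ℝ V : V ≃L[ℝ] V) : V →L[ℝ] V)
      univ (t * K) := by
    rw [ApproximatesLinearOn.approximatesLinearOn_iff_lipschitzOnWith]
    refine LipschitzWith.lipschitzOnWith ?_
    have : ψ - ((ContinuousLinearEquiv.refl ℝ V : V ≃L[ℝ] V) : V →L[ℝ] V)
        = fun x => (t : ℝ) • (closedBall 0 R).indicator h x := by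
      ext x; simp [hψ]
    rw [this]
    refine LipschitzWith.of_dist_le_mul fun x y => ?_
    rw [dist_smul₀, Real.norm_of_nonneg t.coe_nonneg]
    have := hL.dist_le_mul x y
    calc (t : ℝ) * _ ≤ t * (K * dist x y) := by gcongr
      _ = _ := by simp [mul_assoc]
  have hc : Subsingleton V ∨
      (t * K : NNReal) <
        ‖((ContinuousLinearEquiv.refl ℝ V).symm : V →L[ℝ] V)‖₊⁻¹ := by
    rcases subsingleton_or_nontrivial V with h | h
    · exact Or.inl h
    · right
      have : ‖((ContinuousLinearEquiv.refl ℝ V).symm : V →L[ℝ] V)‖₊ = 1 := by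
        ext; exact ContinuousLinearMap.norm_id
      rw [this, inv_one, ← NNReal.coe_lt_coe]
      simpa using ht
  have hsurj := happ.surjective hc
  have hinj : Function.Injective ψ := injOn_univ.1 (happ.injOn hc)
  have hout : ∀ x, x ∉ closedBall (0 : V) R → ψ x = x := fun x hx => by
    simp [hψ, indicator_of_notMem hx]
  have heq : EqOn (fun x => x + (t : ℝ) • h x) ψ (closedBall 0 R) := fun x hx => by
    simp [hψ, indicator_of_mem hx]
  refine ⟨(heq.injOn_iff).2 hinj.injOn, ?_⟩
  rw [heq.image_eq]
  apply Subset.antisymm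
  · rintro _ ⟨x, hx, rfl⟩
    by_contra hcon
    rw [hinj (hout _ hcon)] at hcon
    exact hcon hx
  · intro y hy
    obtain ⟨x, rfl⟩ := hsurj y
    refine ⟨x, ?_, rfl⟩
    by_contra hcon
    rw [hout x hcon] at hy
    exact hcon hy

/-- No `C¹` map with values in the sphere of radius `R` restricts to the identity on that sphere.
This is the volume argument of Milnor and Rogers. -/
lemma no_retraction {V : Type*} [NormedAddCommGroup V] [InnerProductSpace ℝ V]
    [FiniteDimensional ℝ V] (f : V → V) (R : ℝ) (hR : 0 < R) (hf : ContDiff ℝ 1 f)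
    (hid : ∀ x, ‖x‖ = R → f x = x) (hsph : ∀ x, ‖f x‖ = R) : False := by
  classical
  let _ : MeasurableSpace V := borel V
  have : BorelSpace V := ⟨rfl⟩
  let B : Set V := closedBall 0 R
  have hBc : IsCompact B := isCompact_closedBall 0 R
  let h : V → V := fun x => f x - x
  have hh : ContDiff ℝ 1 h := hf.sub contDiff_id
  have h0 : ∀ x, ‖x‖ = R → h x = 0 := fun x hx => by simp [h, hid x hx]
  have hhd : Differentiable ℝ h := hh.differentiable (by norm_num)
  have hcd : Continuous (fderiv ℝ h) := hh.continuous_fderiv (by norm_num)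
  obtain ⟨K₀, hK₀⟩ := hBc.exists_bound_of_continuousOn hcd.continuousOn
  set K : NNReal := Real.toNNReal K₀ with hKdef
  have hbd : ∀ x ∈ B, ‖fderiv ℝ h x‖ ≤ K := fun x hx =>
    (hK₀ x hx).trans (Real.le_coe_toNNReal K₀)
  have hK : LipschitzOnWith K h B :=
    (convex_closedBall 0 R).lipschitzOnWith_of_nnnorm_fderiv_le (fun x _ => hhd x)
      (fun x hx => hbd x hx)
  -- `J t` is the Jacobian determinant of `id + t h`.
  let J : ℝ → V → ℝ := fun t x => (ContinuousLinearMap.id ℝ V + t • fderiv ℝ h x).det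
  have hJc : ∀ t, Continuous (J t) := fun t =>
    ContinuousLinearMap.continuous_det.comp (continuous_const.add (hcd.const_smul t))
  have hJi : ∀ t, IntegrableOn (J t) B volume := fun t =>
    (hJc t).continuousOn.integrableOn_compact hBc
  obtain ⟨δ, hδ, hδdet⟩ : ∃ δ > 0, ∀ M : V →L[ℝ] V,
      dist M (ContinuousLinearMap.id ℝ V) < δ → 0 < M.det := by
    have h1 : (0 : ℝ) < (ContinuousLinearMap.id ℝ V).det := by
      simp [ContinuousLinearMap.det]
    exact Metric.eventually_nhds_iff.1
      (ContinuousLinearMap.continuous_det.continuousAt.eventually (lt_mem_nhds h1))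
  obtain ⟨τ, hτ, hτ1, hτδ⟩ : ∃ τ : ℝ, 0 < τ ∧ τ * K < 1 ∧ τ * K < δ := by
    refine ⟨min 1 δ / (K + 1), by positivity, ?_, ?_⟩ <;>
    · have hm : 0 < min 1 δ := by positivity
      have : min 1 δ / (K + 1) * K < min 1 δ := by
        rw [div_mul_eq_mul_div, div_lt_iff₀ (by positivity)]
        nlinarith
      first
        | exact this.trans_le (min_le_left _ _)
        | exact this.trans_le (min_le_right _ _)
  have hsmall : ∀ t, 0 ≤ t → t ≤ τ → ∫ x in B, J t x = volume.real B := by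
    intro t ht0 htτ
    have htK : t * K ≤ τ * K := by gcongr
    obtain ⟨hinj, himg⟩ := image_closedBall_of_small hK h0 ht0 (htK.trans_lt hτ1)
    have hder : ∀ x ∈ B, HasFDerivWithinAt (fun x => x + t • h x)
        (ContinuousLinearMap.id ℝ V + t • fderiv ℝ h x) B x := fun x _ =>
      ((hasFDerivAt_id x).add ((hhd x).hasFDerivAt.const_smul t)).hasFDerivWithinAt
    have hcv := integral_image_eq_integral_abs_det_fderiv_smul volume
      measurableSet_closedBall hder hinj (fun _ => (1 : ℝ))
    rw [himg] at hcv
    have hpos : ∀ x ∈ B, 0 < J t x := fun x hx => by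
      refine hδdet _ ?_
      rw [dist_eq_norm, add_sub_cancel_left, norm_smul, Real.norm_of_nonneg ht0]
      have := hbd x hx
      calc t * _ ≤ t * K := by gcongr
        _ < δ := htK.trans_lt hτδ
    calc ∫ x in B, J t x = ∫ x in B, |J t x| • (1 : ℝ) :=
          setIntegral_congr_fun measurableSet_closedBall fun x hx => by
            simp [abs_of_pos (hpos x hx)]
      _ = ∫ x in B, (1 : ℝ) := hcv.symm
      _ = volume.real B := by simp
  -- At `t = 1` the map is `f`; differentiating `‖f‖² = R²` puts the range of `Df` in `(f x)ᗮ`.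
  have hJ1 : ∀ x, J 1 x = 0 := by
    intro x
    have hfd : ContinuousLinearMap.id ℝ V + (1 : ℝ) • fderiv ℝ h x = fderiv ℝ f x := by
      have hfx : DifferentiableAt ℝ f x := hf.differentiable (by norm_num) x
      have : fderiv ℝ h x = fderiv ℝ f x - ContinuousLinearMap.id ℝ V :=
        (hfx.hasFDerivAt.sub (hasFDerivAt_id x)).fderiv
      rw [this, one_smul]; abel
    have horth : ∀ v, inner ℝ (f x) (fderiv ℝ f x v) = 0 := by
      intro v
      have hfx : HasFDerivAt f (fderiv ℝ f x) x :=
        (hf.differentiable (by norm_num) x).hasFDerivAt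
      have h1 := (hfx.norm_sq)
      have h2 : (fun y => ‖f y‖ ^ 2) = fun _ => R ^ 2 := by ext y; rw [hsph]
      rw [h2] at h1
      have h3 := h1.unique (hasFDerivAt_const _ _)
      have h4 := congrArg (fun A => A v) h3
      simpa using h4
    show ContinuousLinearMap.det _ = 0
    rw [hfd]
    by_contra hdet
    have hu : IsUnit (LinearMap.det (fderiv ℝ f x : V →ₗ[ℝ] V)) := isUnit_iff_ne_zero.2 hdet
    obtain ⟨v, hv⟩ := ((Module.End.isUnit_iff _).1
      ((LinearMap.isUnit_iff_isUnit_det _).2 hu)).surjective (f x)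
    have hv' : fderiv ℝ f x v = f x := hv
    have h5 := horth v
    rw [hv', real_inner_self_eq_norm_sq, hsph] at h5
    exact absurd h5 (ne_of_gt (pow_pos hR 2))
  -- `t ↦ J t x` has degree at most `n`, so `J 1 x` is a fixed linear combination, with weights
  -- summing to `1`, of its values at `n + 1` nodes in the range of `t` covered by `hsmall`.
  let n := Module.finrank ℝ V
  let s : Finset ℕ := Finset.range (n + 1)
  let node : ℕ → ℝ := fun i => τ * (i / (n + 1))
  have hn1 : (0 : ℝ) < n + 1 := by positivity
  have hinj : InjOn node s := by
    intro i _ j _ hij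
    have := mul_left_cancel₀ hτ.ne' hij
    have := (div_left_inj' hn1.ne').1 this
    exact_mod_cast this
  let w : ℕ → ℝ := fun i => (Lagrange.basis s node i).eval 1
  have hw : ∑ i ∈ s, w i = 1 := by
    have := congrArg (eval 1) (Lagrange.sum_basis hinj (by simp [s]))
    simpa [eval_finsetSum] using this
  have hinterp : ∀ x, J 1 x = ∑ i ∈ s, w i * J (node i) x := by
    intro x
    obtain ⟨q, hq, hqe⟩ := exists_poly_det (fderiv ℝ h x)
    have hdeg : q.degree < s.card := by
      refine degree_le_natDegree.trans_lt ?_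
      simp only [s, Finset.card_range]
      exact_mod_cast Nat.lt_succ_of_le hq
    have := congrArg (eval 1) (Lagrange.eq_interpolate hinj hdeg)
    rw [Lagrange.interpolate_apply, eval_finsetSum, hqe] at this
    rw [show J 1 x = _ from this]
    refine Finset.sum_congr rfl fun i _ => ?_
    rw [eval_mul, eval_C, hqe, mul_comm]
  have hvol : ∫ x in B, J 1 x = volume.real B := by
    simp_rw [hinterp]
    rw [integral_finsetSum _ fun i _ => ((hJi (node i)).const_mul (w i))]
    calc ∑ i ∈ s, ∫ x in B, w i * J (node i) x = ∑ i ∈ s, w i * volume.real B := by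
          refine Finset.sum_congr rfl fun i hi => ?_
          rw [integral_const_mul, hsmall _ (by positivity)]
          have : (i : ℝ) ≤ n + 1 := by
            have := Finset.mem_range.1 hi
            exact_mod_cast this.le
          exact mul_le_of_le_one_right hτ.le ((div_le_one hn1).2 this)
      _ = volume.real B := by rw [← Finset.sum_mul, hw, one_mul]
  simp only [hJ1, integral_zero] at hvol
  have : 0 < volume.real B :=
    ENNReal.toReal_pos (measure_closedBall_pos volume 0 hR).ne' hBc.measure_lt_top.ne
  linarith

/-- A `C¹` map equal to the identity on a sphere has a zero; otherwise its radial projection to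
the sphere would contradict `no_retraction`. -/
lemma exists_zero_of_eq_id_outside {V : Type*} [NormedAddCommGroup V] [InnerProductSpace ℝ V]
    [FiniteDimensional ℝ V] (F : V → V) (R : ℝ) (hR : 0 < R) (hF : ContDiff ℝ 1 F)
    (hid : ∀ x, ‖x‖ = R → F x = x) : ∃ x, F x = 0 := by
  by_contra! hne
  refine no_retraction (fun x => (R / ‖F x‖) • F x) R hR ?_ ?_ ?_
  · exact (contDiff_const.div (hF.norm ℝ hne) fun x => norm_ne_zero_iff.2 (hne x)).smul hF
  · intro x hx
    simp [hid x hx, hx, hR.ne']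
  · intro x
    have := norm_pos_iff.2 (hne x)
    rw [norm_smul, Real.norm_of_nonneg (by positivity), div_mul_cancel₀ _ this.ne']

/-- A bounded continuous self-map of a finite-dimensional inner product space has a fixed point. -/
lemma exists_fixedPoint_of_bounded {V : Type*} [NormedAddCommGroup V] [InnerProductSpace ℝ V]
    [FiniteDimensional ℝ V] (G : V → V) (R : ℝ) (hR : 0 ≤ R) (hG : Continuous G)
    (hb : ∀ x, ‖G x‖ ≤ R) : ∃ x, G x = x := by
  have happrox : ∀ δ : ℝ, 0 < δ → δ ≤ 1 → ∃ x ∈ closedBall (0 : V) (R + 1), ‖x - G x‖ < δ := by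
    intro δ hδ hδ1
    -- A cutoff equal to `1` where `‖x‖ ≤ R + 1` and to `0` where `‖x‖ ≥ R + 2`.
    let c : V → ℝ := fun x => max 0 (min 1 (R + 2 - ‖x‖))
    have hc : Continuous c := by fun_prop
    have hc0 : ∀ x, 0 ≤ c x := fun x => le_max_left _ _
    have hc1 : ∀ x, c x ≤ 1 := fun x => max_le zero_le_one (min_le_left _ _)
    obtain ⟨k, hk, hkd, hks⟩ := (hc.smul hG).exists_contDiff_approx (n := 1)
      (continuous_const (y := δ)) (fun _ => hδ)
    obtain ⟨x, hx⟩ := exists_zero_of_eq_id_outside (fun x => x - k x) (R + 2) (by positivity)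
      (contDiff_id.sub hk) (by
        intro x hx
        have : k x = 0 := by
          by_contra hkx
          have := hks hkx
          simp [c, hx] at this
        simp [this])
    have hx : k x = x := (sub_eq_zero.1 hx).symm
    have hd : ‖x - c x • G x‖ < δ := by
      have := hkd x
      rwa [hx, dist_eq_norm] at this
    have hcG : ‖c x • G x‖ ≤ R := by
      rw [norm_smul, Real.norm_of_nonneg (hc0 x)]
      exact (mul_le_of_le_one_left (norm_nonneg _) (hc1 x)).trans (hb x)
    have hxn : ‖x‖ ≤ R + 1 := by
      have := norm_le_insert' x (c x • G x)
      linarith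
    have hcx : c x = 1 := by
      have : min 1 (R + 2 - ‖x‖) = 1 := min_eq_left (by linarith)
      simp [c, this]
    rw [hcx, one_smul] at hd
    exact ⟨x, by simpa using hxn, hd⟩
  obtain ⟨x, -, hmin⟩ := (isCompact_closedBall (0 : V) (R + 1)).exists_isMinOn
    ⟨0, by simp; positivity⟩ (f := fun x => ‖x - G x‖) (by fun_prop)
  refine ⟨x, ?_⟩
  by_contra hne
  have hpos : 0 < ‖x - G x‖ := norm_pos_iff.2 (sub_ne_zero.2 (Ne.symm hne))
  obtain ⟨y, hy, hyd⟩ := happrox (min 1 ‖x - G x‖) (by positivity) (min_le_left _ _)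
  have := isMinOn_iff.1 hmin y hy
  have := hyd.trans_le (min_le_right _ _)
  linarith

/-- **Brouwer's fixed point theorem** for the closed ball of an arbitrary norm on a
finite-dimensional space. -/
theorem brouwer_closedBall {X : Type*} [NormedAddCommGroup X] [NormedSpace ℝ X]
    [FiniteDimensional ℝ X] (g : X → X) (S : ℝ) (hS : 0 < S)
    (hg : ContinuousOn g (closedBall 0 S)) (hmaps : MapsTo g (closedBall 0 S) (closedBall 0 S)) :
    ∃ x ∈ closedBall (0 : X) S, g x = x := by
  -- The radial projection onto the ball.
  let r : X → X := fun x => (S / max S ‖x‖) • x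
  have hm : ∀ x : X, 0 < max S ‖x‖ := fun x => lt_max_of_lt_left hS
  have hr : Continuous r :=
    (continuous_const.div (by fun_prop) fun x => (hm x).ne').smul continuous_id
  have hrB : ∀ x, r x ∈ closedBall (0 : X) S := fun x => by
    rw [mem_closedBall_zero_iff, norm_smul, Real.norm_of_nonneg (div_nonneg hS.le (hm x).le),
      div_mul_eq_mul_div, div_le_iff₀ (hm x)]
    gcongr
    exact le_max_right _ _
  have hrid : ∀ x ∈ closedBall (0 : X) S, r x = x := fun x hx => by
    simp [r, max_eq_left (mem_closedBall_zero_iff.1 hx), hS.ne']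
  have hgr : Continuous (g ∘ r) := hg.comp_continuous hr hrB
  let e : X ≃L[ℝ] EuclideanSpace ℝ (Fin (Module.finrank ℝ X)) :=
    ContinuousLinearEquiv.ofFinrankEq (by simp)
  obtain ⟨y, hy⟩ := exists_fixedPoint_of_bounded (fun y => e (g (r (e.symm y))))
    (‖(e : X →L[ℝ] EuclideanSpace ℝ (Fin (Module.finrank ℝ X)))‖ * S) (by positivity)
    (e.continuous.comp (hgr.comp e.symm.continuous)) (fun y => by
      refine ((e : X →L[ℝ] EuclideanSpace ℝ (Fin (Module.finrank ℝ X))).le_opNorm _).trans ?_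
      gcongr
      exact mem_closedBall_zero_iff.1 (hmaps (hrB _)))
  have hfix : g (r (e.symm y)) = e.symm y := by
    rw [← e.symm_apply_apply (g _), hy]
  have hmem : e.symm y ∈ closedBall (0 : X) S := hfix ▸ hmaps (hrB _)
  rw [hrid _ hmem] at hfix
  exact ⟨_, hmem, hfix⟩

/-! ### Two fixed points for a perturbed state map -/

lemma pnorm_eq_norm {p : ℝ≥0∞} [Fact (1 ≤ p)] {D : ℕ} (x : Fin D → ℝ) :
    pnorm p x = ‖WithLp.toLp p x‖ := by
  unfold pnorm
  split_ifs with h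
  · subst h
    simp [PiLp.norm_eq_ciSup]
  · have : 0 < p.toReal :=
      ENNReal.toReal_pos (zero_lt_one.trans_le (Fact.out : 1 ≤ p)).ne' h
    simp [PiLp.norm_eq_sum this]

/-- Denseness of non-ESP state maps: every continuous domain-preserving state
map can be approximated arbitrarily well in the supremum `p`-norm by a
continuous domain-preserving state map without the echo state property; the
perturbed map has two distinct fixed points for some constant input, which
yield two distinct state sequences for the constant left-infinite input. -/
theorem non_esp_maps_dense
    (p : ℝ≥0∞) (hp : 1 ≤ p) (D E : ℕ) (hD : 0 < D) (hE : 0 < E)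
    (S I : ℝ) (hS : 0 < S) (hI : 0 < I)
    (g : (Fin D → ℝ) → (Fin E → ℝ) → (Fin D → ℝ))
    (hgS : ∀ x, pnorm p x ≤ S → ∀ u, pnorm p u ≤ I → pnorm p (g x u) ≤ S)
    (hgcont : ContinuousOn (fun z : (Fin D → ℝ) × (Fin E → ℝ) => g z.1 z.2)
      ({x : Fin D → ℝ | pnorm p x ≤ S} ×ˢ {u : Fin E → ℝ | pnorm p u ≤ I}))
    (ε : ℝ) (hε : 0 < ε) :
    ∃ g' : (Fin D → ℝ) → (Fin E → ℝ) → (Fin D → ℝ),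
      (∀ x, pnorm p x ≤ S → ∀ u, pnorm p u ≤ I → pnorm p (g' x u) ≤ S) ∧
      ContinuousOn (fun z : (Fin D → ℝ) × (Fin E → ℝ) => g' z.1 z.2)
        ({x : Fin D → ℝ | pnorm p x ≤ S} ×ˢ {u : Fin E → ℝ | pnorm p u ≤ I}) ∧
      (∀ x, pnorm p x ≤ S → ∀ u, pnorm p u ≤ I → pnorm p (g x u - g' x u) ≤ ε) ∧
      ∃ v₀ : Fin E → ℝ, pnorm p v₀ ≤ I ∧
        ∃ x₁ x₂ : Fin D → ℝ, pnorm p x₁ ≤ S ∧ pnorm p x₂ ≤ S ∧ x₁ ≠ x₂ ∧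
          g' x₁ v₀ = x₁ ∧ g' x₂ v₀ = x₂ ∧
          -- the two constant sequences are distinct state sequences of `g'`
          -- for the constant input `(…, v₀, v₀)`, so `g'` lacks the echo
          -- state property:
          ¬ (∀ u : ℤ → Fin E → ℝ, (∀ t, pnorm p (u t) ≤ I) →
              ∀ x y : ℤ → Fin D → ℝ,
                (∀ t : ℤ, t ≤ 0 → pnorm p (x t) ≤ S) →
                (∀ t : ℤ, t ≤ 0 → x t = g' (x (t - 1)) (u t)) →
                (∀ t : ℤ, t ≤ 0 → pnorm p (y t) ≤ S) →
                (∀ t : ℤ, t ≤ 0 → y t = g' (y (t - 1)) (u t)) →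
                ∀ t : ℤ, t ≤ 0 → x t = y t) := by
  classical
  have : Fact (1 ≤ p) := ⟨hp⟩
  let X := PiLp p (fun _ : Fin D => ℝ)
  have hzero : pnorm p (0 : Fin E → ℝ) = 0 := by rw [pnorm_eq_norm]; simp
  have hcN : Continuous fun x : Fin D → ℝ => pnorm p x := by
    simp_rw [pnorm_eq_norm]
    exact (PiLp.continuous_toLp p _).norm
  have hv0 : pnorm p (0 : Fin E → ℝ) ≤ I := hzero ▸ hI.le
  have hconv : Convex ℝ {x : Fin D → ℝ | pnorm p x ≤ S} := by
    intro x hx y hy a b ha hb hab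
    simp only [mem_ofPred_eq, pnorm_eq_norm, ← mem_closedBall_zero_iff] at hx hy ⊢
    exact convex_closedBall 0 S hx hy ha hb hab
  have hg0 : ContinuousOn (fun x => g x 0) {x : Fin D → ℝ | pnorm p x ≤ S} :=
    hgcont.comp (f := fun x : Fin D → ℝ => (x, (0 : Fin E → ℝ))) (by fun_prop)
      fun x hx => ⟨hx, hv0⟩
  have hmem : ∀ y ∈ closedBall (0 : X) S, pnorm p (WithLp.ofLp y) ≤ S := fun y hy => by
    rw [pnorm_eq_norm]; exact mem_closedBall_zero_iff.1 hy
  obtain ⟨z, hzS, hz⟩ := brouwer_closedBall (X := X)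
    (fun y => WithLp.toLp p (g (WithLp.ofLp y) 0)) S hS
    ((PiLp.continuous_toLp p _).comp_continuousOn
      (hg0.comp (PiLp.continuous_ofLp p _).continuousOn hmem))
    (fun y hy => by
      rw [mem_closedBall_zero_iff, ← pnorm_eq_norm]
      exact hgS _ (hmem y hy) _ hv0)
  obtain ⟨x₁, hx₁S, hx₁⟩ : ∃ x₁, pnorm p x₁ ≤ S ∧ g x₁ 0 = x₁ :=
    ⟨WithLp.ofLp z, hmem z hzS, congrArg WithLp.ofLp hz⟩
  -- The second fixed point of `g'` will lie on the segment from `x₁` to `w`, close to `x₁`.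
  obtain ⟨w, hwS, hw⟩ : ∃ w : Fin D → ℝ, pnorm p w ≤ S ∧ w ≠ x₁ := by
    have hone : pnorm p (Pi.single (⟨0, hD⟩ : Fin D) S) ≤ S := by
      rw [pnorm_eq_norm]
      exact ((PiLp.norm_single p (fun _ : Fin D => ℝ) ⟨0, hD⟩ S).trans
        (Real.norm_of_nonneg hS.le)).le
    by_cases h : x₁ = 0
    · refine ⟨_, hone, fun h' => hS.ne' ?_⟩
      have := congrFun (h'.trans h) ⟨0, hD⟩
      simpa using this
    · refine ⟨0, ?_, Ne.symm h⟩
      rw [pnorm_eq_norm]; simpa using hS.le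
  let γ : ℝ → Fin D → ℝ := fun s => AffineMap.lineMap x₁ w s
  have hγ : Continuous γ := AffineMap.lineMap_continuous
  have hγS : MapsTo γ (Icc 0 1) {x : Fin D → ℝ | pnorm p x ≤ S} := fun s hs =>
    hconv.segment_subset hx₁S hwS (by
      rw [segment_eq_image_lineMap]; exact ⟨s, hs, rfl⟩)
  have hdef : ContinuousOn (fun s => pnorm p (g (γ s) 0 - γ s)) (Icc 0 1) :=
    hcN.comp_continuousOn ((hg0.comp hγ.continuousOn hγS).sub hγ.continuousOn)
  have hlim : Tendsto (fun s => pnorm p (g (γ s) 0 - γ s)) (𝓝[>] 0) (𝓝 0) := by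
    have h1 := hdef 0 (by simp)
    have h2 : pnorm p (g (γ 0) 0 - γ 0) = 0 := by
      simp only [γ, AffineMap.lineMap_apply_zero, hx₁, sub_self, pnorm_eq_norm]
      simp
    rw [ContinuousWithinAt, h2] at h1
    refine h1.mono_left (nhdsWithin_le_of_mem ?_)
    exact mem_of_superset (Ioo_mem_nhdsGT zero_lt_one) Ioo_subset_Icc_self
  obtain ⟨s, hsε, hs⟩ := ((hlim.eventually (gt_mem_nhds (half_pos hε))).and
    (Ioo_mem_nhdsGT (zero_lt_one' ℝ))).exists
  -- The weight is `1` where `g` moves `x` by at most `ε / 2`, and `0` where it moves `x` by at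
  -- least `ε`.
  let c : (Fin D → ℝ) → (Fin E → ℝ) → ℝ := fun x u =>
    max 0 (min 1 (2 - 2 * pnorm p (g x u - x) / ε))
  have hc0 : ∀ x u, 0 ≤ c x u := fun x u => le_max_left _ _
  have hc1 : ∀ x u, c x u ≤ 1 := fun x u => max_le zero_le_one (min_le_left _ _)
  let g' : (Fin D → ℝ) → (Fin E → ℝ) → (Fin D → ℝ) := fun x u => g x u + c x u • (x - g x u)
  have hfix : ∀ x, pnorm p (g x 0 - x) ≤ ε / 2 → g' x 0 = x := by
    intro x hx
    have : c x 0 = 1 := by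
      have h1 : 2 * pnorm p (g x 0 - x) / ε ≤ 1 := (div_le_one hε).2 (by linarith)
      have : min 1 (2 - 2 * pnorm p (g x 0 - x) / ε) = 1 := min_eq_left (by linarith)
      simp [c, this]
    simp [g', this]
  have hfix₁ : g' x₁ 0 = x₁ := hfix x₁ (by
    rw [hx₁, sub_self, pnorm_eq_norm]; simpa using (half_pos hε).le)
  have hfix₂ : g' (γ s) 0 = γ s := hfix _ hsε.le
  have hne : x₁ ≠ γ s := by
    intro h
    have h1 : AffineMap.lineMap x₁ w s = x₁ := h.symm
    rcases AffineMap.lineMap_eq_left_iff.1 h1 with h2 | h2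
    · exact hw h2.symm
    · exact hs.1.ne' h2
  have hγsS : pnorm p (γ s) ≤ S := hγS ⟨hs.1.le, hs.2.le⟩
  refine ⟨g', ?_, ?_, ?_, 0, hv0, x₁, γ s, hx₁S, hγsS, hne, hfix₁, hfix₂, ?_⟩
  · intro x hx u hu
    exact hconv.add_smul_sub_mem (hgS x hx u hu) hx ⟨hc0 x u, hc1 x u⟩
  · have hd : ContinuousOn (fun z : (Fin D → ℝ) × (Fin E → ℝ) => pnorm p (g z.1 z.2 - z.1))
        ({x : Fin D → ℝ | pnorm p x ≤ S} ×ˢ {u : Fin E → ℝ | pnorm p u ≤ I}) :=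
      hcN.comp_continuousOn (hgcont.sub continuousOn_fst)
    have hc : ContinuousOn (fun z : (Fin D → ℝ) × (Fin E → ℝ) => c z.1 z.2)
        ({x : Fin D → ℝ | pnorm p x ≤ S} ×ˢ {u : Fin E → ℝ | pnorm p u ≤ I}) :=
      (by fun_prop : Continuous fun r : ℝ => max 0 (min 1 (2 - 2 * r / ε))).comp_continuousOn hd
    exact hgcont.add (hc.smul (continuousOn_fst.sub hgcont))
  · intro x hx u hu
    have h1 : pnorm p (g x u - g' x u) = c x u * pnorm p (g x u - x) := by
      have : g x u - g' x u = c x u • (g x u - x) := by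
        simp only [g', smul_sub]; abel
      rw [this, pnorm_eq_norm, pnorm_eq_norm, WithLp.toLp_smul, norm_smul,
        Real.norm_of_nonneg (hc0 x u)]
    rw [h1]
    have hn : 0 ≤ pnorm p (g x u - x) := by rw [pnorm_eq_norm]; positivity
    rcases le_total (pnorm p (g x u - x)) ε with h | h
    · exact (mul_le_of_le_one_left hn (hc1 x u)).trans h
    · have h2 : 2 ≤ 2 * pnorm p (g x u - x) / ε := (le_div_iff₀ hε).2 (by linarith)
      have : c x u = 0 := max_eq_left ((min_le_right _ _).trans (by linarith))
      rw [this, zero_mul]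
      exact hε.le
  · intro hesp
    exact hne (hesp (fun _ => 0) (fun _ => hv0) (fun _ => x₁) (fun _ => γ s)
      (fun _ _ => hx₁S) (fun _ _ => hfix₁.symm) (fun _ _ => hγsS) (fun _ _ => hfix₂.symm) 0 le_rfl)
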